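/- There exists a deterministic online bin-packing algorithm A such that for every finite input sequence I of small L-shapes (those with ℓx ≤ 1/2 and ℓy ≤ 1/2), the number of bins used by A on I is at most 8·OPT(I) + 7. -/

import Mathlib

/-!
The algorithm works with dyadic boxes. An item whose arms satisfy `2⁻ⁱ / 4 < lx ≤ 2⁻ⁱ / 2` and
`2⁻ʲ / 4 < ly ≤ 2⁻ʲ / 2` has class `(i, j)` and is packed into a box of size `2⁻ⁱ × 2⁻ʲ`. Within
a box, the items are nested along a staircase: each reference point is the previous one moved by
the widths `(wx, wy)` of the previous item. Since the arms are at most half as long as the sides,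
this works as long as the accumulated offset is at most half the side in both directions. When it
stops working, say because the `wx` sum to more than `2⁻ⁱ / 2`, the items in the box have total
area at least `∑ wx * ly`, which exceeds an eighth of the area of the box (`exists_usable`,
`exists_extend`).

Boxes of class `(i, j + 1)` come from halving a box of class `(i, j)`, boxes of class `(i + 1, 0)`
from halving a box of class `(i, 0)`, and a box of class `(0, 0)` is a new bin. The other half is
kept as the spare box of its class and used first, so that every class has at most one spare box
(`exists_alloc`).

Hence the number of bins is at most eight times the total area of the items, plus the area of the
at most one spare and at most one active box of each class. The areas of one box of each of
finitely many classes sum to less than `4` (`sum_boxArea_lt`), so fewer than `8 * area + 8` bins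
are used, and `area ≤ OPT` (`weight_le_of_offPacks`); as these are integers, the bound follows.

The only property of the placements so far that the algorithm uses is the invariant `Good`; each
step chooses a placement that keeps it.
-/

/-- An L-shape, given by its four parameters: arm lengths `lx, ly` and widths `wx, wy`. -/
structure LShape where
  lx : ℝ
  wx : ℝ
  ly : ℝ
  wy : ℝ

/-- The parameter constraints of an L-shape: `0 ≤ wx ≤ lx ≤ 1` and `0 ≤ wy ≤ ly ≤ 1`. -/
def LShape.IsValid (L : LShape) : Prop :=
  0 ≤ L.wx ∧ L.wx ≤ L.lx ∧ L.lx ≤ 1 ∧ 0 ≤ L.wy ∧ L.wy ≤ L.ly ∧ L.ly ≤ 1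

/-- The point set `([0,lx]×[0,wy]) ∪ ([0,wx]×[0,ly])` of an L-shape (reference point at the
origin). -/
def LShape.toSet (L : LShape) : Set (ℝ × ℝ) :=
  Set.Icc ((0, 0) : ℝ × ℝ) (L.lx, L.wy) ∪ Set.Icc ((0, 0) : ℝ × ℝ) (L.wx, L.ly)

/-- Translate a set in the plane by a vector. -/
def planeTranslate (v : ℝ × ℝ) (S : Set (ℝ × ℝ)) : Set (ℝ × ℝ) := (· + v) '' S

/-- The unit bin `[0,1]²`. -/
def unitBin : Set (ℝ × ℝ) := Set.Icc ((0, 0) : ℝ × ℝ) (1, 1)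

/-- The online decision (bin index, translation vector) made by algorithm `A` for the `i`-th
item of the list `l`: it depends only on the first `i+1` items. -/
def placeOf (A : List LShape → ℕ × ℝ × ℝ) (l : List LShape) (i : Fin l.length) : ℕ × ℝ × ℝ :=
  A (l.take (i.1 + 1))

/-- The placements produced by `A` on input `l` form valid bin packings: each translate lies
in the unit bin, and items in the same bin have pairwise disjoint interiors. -/
def OnlinePacks (A : List LShape → ℕ × ℝ × ℝ) (l : List LShape) : Prop :=
  (∀ i : Fin l.length, planeTranslate (placeOf A l i).2 (l.get i).toSet ⊆ unitBin) ∧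
  ∀ i j : Fin l.length, i ≠ j → (placeOf A l i).1 = (placeOf A l j).1 →
    Disjoint (interior (planeTranslate (placeOf A l i).2 (l.get i).toSet))
             (interior (planeTranslate (placeOf A l j).2 (l.get j).toSet))

/-- The number of distinct bins used by `A` on input `l`. -/
def binsUsed (A : List LShape → ℕ × ℝ × ℝ) (l : List LShape) : ℕ :=
  ((Finset.univ : Finset (Fin l.length)).image fun i => (placeOf A l i).1).card

/-- The items of `l` can be packed offline into `m` unit bins. -/
def OffPacks (l : List LShape) (m : ℕ) : Prop :=
  ∃ (bin : Fin l.length → ℕ) (v : Fin l.length → ℝ × ℝ),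
    (∀ i, bin i < m) ∧
    (∀ i, planeTranslate (v i) (l.get i).toSet ⊆ unitBin) ∧
    ∀ i j, i ≠ j → bin i = bin j →
      Disjoint (interior (planeTranslate (v i) (l.get i).toSet))
               (interior (planeTranslate (v j) (l.get j).toSet))

/-- The offline optimum: the minimum number of unit bins into which `l` can be packed. -/
noncomputable def OPT (l : List LShape) : ℕ := sInf {m | OffPacks l m}

/-! ### Dyadic boxes and their allocation -/

/-- The dyadic side length `2⁻ⁱ`. -/
noncomputable def side (i : ℕ) : ℝ := (1 / 2) ^ i

/-- The area of a box of class `c = (i, j)`, which measures `2⁻ⁱ × 2⁻ʲ`. -/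
noncomputable def boxArea (c : ℕ × ℕ) : ℝ := side c.1 * side c.2

/-- A box of class `c` is given by its bin and lower left corner, `r = (bin, x, y)`. This is the
open part of it above and to the right of the offset `s`, as a set of pairs (bin, point). -/
def slot (c : ℕ × ℕ) (r : ℕ × ℝ × ℝ) (s : ℝ × ℝ) : Set (ℕ × ℝ × ℝ) :=
  {p | p.1 = r.1 ∧ r.2.1 + s.1 < p.2.1 ∧ p.2.1 < r.2.1 + side c.1 ∧
    r.2.2 + s.2 < p.2.2 ∧ p.2.2 < r.2.2 + side c.2}

/-- The box of class `c` at `r` lies in the unit square of its bin. -/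
def InUnit (c : ℕ × ℕ) (r : ℕ × ℝ × ℝ) : Prop :=
  0 ≤ r.2.1 ∧ r.2.1 + side c.1 ≤ 1 ∧ 0 ≤ r.2.2 ∧ r.2.2 + side c.2 ≤ 1

/-- The space not yet handed out when bins `0, …, n - 1` are open and `sp c` is the spare box of
class `c`, if there is one: all unopened bins and all spare boxes. -/
def freeSpace (n : ℕ) (sp : ℕ × ℕ → Option (ℕ × ℝ × ℝ)) : Set (ℕ × ℝ × ℝ) :=
  {p | n ≤ p.1 ∨ ∃ c r, sp c = some r ∧ p ∈ slot c r (0, 0)}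

/-- The spare boxes lie in open bins and are pairwise disjoint. -/
structure AllocInv (n : ℕ) (sp : ℕ × ℕ → Option (ℕ × ℝ × ℝ)) : Prop where
  unit : ∀ c r, sp c = some r → r.1 < n ∧ InUnit c r
  disj : ∀ c d r s, c ≠ d → sp c = some r → sp d = some s →
    Disjoint (slot c r (0, 0)) (slot d s (0, 0))

/-- The area of the spare box of class `c`, or `0` if there is none. -/
noncomputable def spareArea (sp : ℕ × ℕ → Option (ℕ × ℝ × ℝ)) (c : ℕ × ℕ) : ℝ :=
  if (sp c).isSome then boxArea c else 0

/-- The classes `(i, j)` with `i, j < K`. -/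
def classes (K : ℕ) : Finset (ℕ × ℕ) := Finset.range K ×ˢ Finset.range K

lemma side_pos (i : ℕ) : 0 < side i := by unfold side; positivity

lemma side_succ (i : ℕ) : side i = 2 * side (i + 1) := by unfold side; rw [pow_succ]; ring

lemma boxArea_pos (c : ℕ × ℕ) : 0 < boxArea c := mul_pos (side_pos _) (side_pos _)

lemma sum_boxArea_lt (K : ℕ) : ∑ c ∈ classes K, boxArea c < 4 := by
  have h : ∀ K, ∑ i ∈ Finset.range K, side i = 2 - 2 * side K := by
    intro K
    induction K with
    | zero => simp [side]
    | succ K ih => rw [Finset.sum_range_succ, ih, side_succ K]; ring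
  unfold classes boxArea
  rw [Finset.sum_product, ← Finset.sum_mul_sum, h]
  have h1 := side_pos K
  have h2 : side K ≤ 1 := by unfold side; exact pow_le_one₀ (by norm_num) (by norm_num)
  nlinarith

/-- Every class other than `(0, 0)` has a parent class, whose boxes split into two boxes of the
given class. -/
lemma exists_parent (c : ℕ × ℕ) : c = (0, 0) ∨ ∃ d : ℕ × ℕ, d.1 + d.2 < c.1 + c.2 ∧ d.1 ≤ c.1 ∧
    d.2 ≤ c.2 ∧ boxArea d = 2 * boxArea c ∧ ∀ r, InUnit d r → ∃ r₁ r₂, r₁.1 = r.1 ∧ r₂.1 = r.1 ∧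
      InUnit c r₁ ∧ InUnit c r₂ ∧ slot c r₁ (0, 0) ⊆ slot d r (0, 0) ∧
      slot c r₂ (0, 0) ⊆ slot d r (0, 0) ∧ Disjoint (slot c r₁ (0, 0)) (slot c r₂ (0, 0)) := by
  obtain ⟨i, j⟩ := c
  rcases j with _ | j
  · rcases i with _ | i
    · left; rfl
    · right
      have hs := side_succ i
      have hp := side_pos (i + 1)
      refine ⟨(i, 0), by simp, by simp, by simp, by simp only [boxArea]; rw [hs]; ring, ?_⟩
      rintro ⟨b, x, y⟩ ⟨h1, h2, h3, h4⟩
      refine ⟨(b, x, y), (b, x + side (i + 1), y), rfl, rfl, ?_, ?_, ?_, ?_, ?_⟩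
      · simp only [InUnit] at *; refine ⟨?_, ?_, ?_, ?_⟩ <;> linarith
      · simp only [InUnit] at *; refine ⟨?_, ?_, ?_, ?_⟩ <;> linarith
      · rintro ⟨b', x', y'⟩ h
        simp only [slot, Set.mem_ofPred_eq] at *
        obtain ⟨g0, g1, g2, g3, g4⟩ := h
        refine ⟨g0, ?_, ?_, ?_, ?_⟩ <;> linarith
      · rintro ⟨b', x', y'⟩ h
        simp only [slot, Set.mem_ofPred_eq] at *
        obtain ⟨g0, g1, g2, g3, g4⟩ := h
        refine ⟨g0, ?_, ?_, ?_, ?_⟩ <;> linarith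
      · rw [Set.disjoint_left]
        rintro ⟨b', x', y'⟩ h h'
        simp only [slot, Set.mem_ofPred_eq] at *
        obtain ⟨g0, g1, g2, g3, g4⟩ := h
        obtain ⟨k0, k1, k2, k3, k4⟩ := h'
        linarith
  · right
    have hs := side_succ j
    have hp := side_pos (j + 1)
    refine ⟨(i, j), by simp, by simp, by simp, by simp only [boxArea]; rw [hs]; ring, ?_⟩
    rintro ⟨b, x, y⟩ ⟨h1, h2, h3, h4⟩
    refine ⟨(b, x, y), (b, x, y + side (j + 1)), rfl, rfl, ?_, ?_, ?_, ?_, ?_⟩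
    · simp only [InUnit] at *; refine ⟨?_, ?_, ?_, ?_⟩ <;> linarith
    · simp only [InUnit] at *; refine ⟨?_, ?_, ?_, ?_⟩ <;> linarith
    · rintro ⟨b', x', y'⟩ h
      simp only [slot, Set.mem_ofPred_eq] at *
      obtain ⟨g0, g1, g2, g3, g4⟩ := h
      refine ⟨g0, ?_, ?_, ?_, ?_⟩ <;> linarith
    · rintro ⟨b', x', y'⟩ h
      simp only [slot, Set.mem_ofPred_eq] at *
      obtain ⟨g0, g1, g2, g3, g4⟩ := h
      refine ⟨g0, ?_, ?_, ?_, ?_⟩ <;> linarith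
    · rw [Set.disjoint_left]
      rintro ⟨b', x', y'⟩ h h'
      simp only [slot, Set.mem_ofPred_eq] at *
      obtain ⟨g0, g1, g2, g3, g4⟩ := h
      obtain ⟨k0, k1, k2, k3, k4⟩ := h'
      linarith

lemma spare_subset_freeSpace {n : ℕ} {sp : ℕ × ℕ → Option (ℕ × ℝ × ℝ)} {c : ℕ × ℕ}
    {r : ℕ × ℝ × ℝ} (h : sp c = some r) : slot c r (0, 0) ⊆ freeSpace n sp :=
  fun _ hp => Or.inr ⟨c, r, h, hp⟩

/-- Replacing the spare box of one class changes the total spare area by the change at that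
class. -/
lemma sum_spareArea_update (sp : ℕ × ℕ → Option (ℕ × ℝ × ℝ)) (c : ℕ × ℕ)
    (o : Option (ℕ × ℝ × ℝ)) {K : ℕ} (h₁ : c.1 < K) (h₂ : c.2 < K) :
    ∑ d ∈ classes K, spareArea (Function.update sp c o) d =
      (if o.isSome then boxArea c else 0) - spareArea sp c +
        ∑ d ∈ classes K, spareArea sp d := by
  have hc : c ∈ classes K := by simp [classes, h₁, h₂]
  rw [← Finset.add_sum_erase _ _ hc, ← Finset.add_sum_erase _ (spareArea sp) hc]
  have : ∑ d ∈ (classes K).erase c, spareArea (Function.update sp c o) d =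
      ∑ d ∈ (classes K).erase c, spareArea sp d := by
    refine Finset.sum_congr rfl fun d hd => ?_
    simp [spareArea, Function.update_of_ne (Finset.ne_of_mem_erase hd)]
  rw [this]
  simp only [spareArea, Function.update_self]
  ring

/-- A box of class `c` can be handed out: the spare one if there is one, otherwise half of a
newly handed out box of the parent class (the other half becomes spare), and a new bin for class
`(0, 0)`. The box is taken from the free space, and the area of open bins minus the total spare
area grows by exactly the area of the box. -/
lemma exists_alloc (c : ℕ × ℕ) (n : ℕ) (sp : ℕ × ℕ → Option (ℕ × ℝ × ℝ)) (hI : AllocInv n sp) :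
    ∃ r n' sp', AllocInv n' sp' ∧ InUnit c r ∧ r.1 < n' ∧ n ≤ n' ∧
      slot c r (0, 0) ⊆ freeSpace n sp ∧ freeSpace n' sp' ⊆ freeSpace n sp ∧
      Disjoint (slot c r (0, 0)) (freeSpace n' sp') ∧
      (∀ d : ℕ × ℕ, c.1 + c.2 < d.1 + d.2 → sp' d = sp d) ∧
      ∀ K, c.1 < K → c.2 < K → (n' : ℝ) - ∑ d ∈ classes K, spareArea sp' d =
        n - ∑ d ∈ classes K, spareArea sp d + boxArea c := by
  induction hm : c.1 + c.2 using Nat.strong_induction_on generalizing c with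
  | _ m ih =>
  subst hm
  rcases hc : sp c with _ | r
  · rcases exists_parent c with rfl | ⟨d, hd, hd1, hd2, hda, hsplit⟩
    · refine ⟨(n, 0, 0), n + 1, sp, ⟨?_, hI.disj⟩, ?_, by simp, by simp, ?_, ?_, ?_, by simp, ?_⟩
      · exact fun c r h => ⟨(hI.unit c r h).1.trans (by simp), (hI.unit c r h).2⟩
      · simp [InUnit, side]
      · rintro p ⟨hp, -⟩
        exact Or.inl hp.ge
      · rintro p (hp | hp)
        · exact Or.inl (by omega)
        · exact Or.inr hp
      · rw [Set.disjoint_left]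
        rintro p ⟨hp, -⟩ (h | ⟨c, r, hr, h, -⟩)
        · simp only at hp; omega
        · have := (hI.unit c r hr).1
          simp only at hp; omega
      · intro K _ _
        have : boxArea (0, 0) = 1 := by simp [boxArea, side]
        rw [this]; push_cast; ring
    · obtain ⟨r, n', sp', hI', hru, hrn, hn, hrf, hff, hrd, hsp, hK⟩ := ih _ hd d rfl
      obtain ⟨r₁, r₂, e₁, e₂, u₁, u₂, s₁, s₂, h12⟩ := hsplit r hru
      have hnone : sp' c = none := by rw [hsp c hd, hc]
      have hfree : freeSpace n' (Function.update sp' c (some r₂)) ⊆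
          freeSpace n' sp' ∪ slot c r₂ (0, 0) := by
        rintro p (hp | ⟨e, s, hs, hp⟩)
        · exact Or.inl (Or.inl hp)
        · by_cases hec : e = c
          · subst hec
            simp only [Function.update_self, Option.some.injEq] at hs
            subst hs; exact Or.inr hp
          · rw [Function.update_of_ne hec] at hs
            exact Or.inl (Or.inr ⟨e, s, hs, hp⟩)
      have key : ∀ e s, e ≠ c → sp' e = some s →
          Disjoint (slot c r₂ (0, 0)) (slot e s (0, 0)) := fun e s _ hs =>
        hrd.mono s₂ (spare_subset_freeSpace hs)
      refine ⟨r₁, n', Function.update sp' c (some r₂), ⟨?_, ?_⟩, u₁, e₁ ▸ hrn, hn,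
        s₁.trans hrf, ?_, ?_, ?_, ?_⟩
      · intro e s hs
        by_cases hec : e = c
        · subst hec
          simp only [Function.update_self, Option.some.injEq] at hs
          subst hs; exact ⟨e₂ ▸ hrn, u₂⟩
        · rw [Function.update_of_ne hec] at hs
          exact hI'.unit e s hs
      · intro e f s t hef hs ht
        by_cases hec : e = c
        · subst hec
          rw [Function.update_of_ne hef.symm] at ht
          simp only [Function.update_self, Option.some.injEq] at hs
          subst hs; exact key f t hef.symm ht
        · rw [Function.update_of_ne hec] at hs
          by_cases hfc : f = c
          · subst hfc
            simp only [Function.update_self, Option.some.injEq] at ht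
            subst ht; exact (key e s hec hs).symm
          · rw [Function.update_of_ne hfc] at ht
            exact hI'.disj e f s t hef hs ht
      · exact hfree.trans (Set.union_subset hff (s₂.trans hrf))
      · exact Disjoint.mono_right hfree (Set.disjoint_union_right.2 ⟨hrd.mono_left s₁, h12⟩)
      · intro e he
        rw [Function.update_of_ne (by rintro rfl; omega)]
        exact hsp e (by omega)
      · intro K h1 h2
        rw [sum_spareArea_update _ _ _ h1 h2]
        have := hK K (by omega) (by omega)
        simp only [Option.isSome_some, if_true, spareArea, hnone, Option.isSome_none] at *
        simp only [Bool.false_eq_true, if_false]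
        linarith
  · have hsub : freeSpace n (Function.update sp c none) ⊆ freeSpace n sp := by
      rintro p (hp | ⟨e, s, hs, hp⟩)
      · exact Or.inl hp
      · by_cases hec : e = c
        · subst hec; simp at hs
        · rw [Function.update_of_ne hec] at hs
          exact Or.inr ⟨e, s, hs, hp⟩
    refine ⟨r, n, Function.update sp c none, ⟨?_, ?_⟩, (hI.unit c r hc).2, (hI.unit c r hc).1,
      le_rfl, spare_subset_freeSpace hc, hsub, ?_, ?_, ?_⟩
    · intro e s hs
      by_cases hec : e = c
      · subst hec; simp at hs
      · rw [Function.update_of_ne hec] at hs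
        exact hI.unit e s hs
    · intro e f s t hef hs ht
      by_cases hec : e = c
      · subst hec; simp at hs
      by_cases hfc : f = c
      · subst hfc; simp at ht
      rw [Function.update_of_ne hec] at hs
      rw [Function.update_of_ne hfc] at ht
      exact hI.disj e f s t hef hs ht
    · rw [Set.disjoint_left]
      rintro p hp (h | ⟨e, s, hs, h⟩)
      · have := (hI.unit c r hc).1
        have := hp.1
        omega
      · by_cases hec : e = c
        · subst hec; simp at hs
        · rw [Function.update_of_ne hec] at hs
          exact Set.disjoint_left.1 (hI.disj c e r s (Ne.symm hec) hc hs) hp h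
    · intro e he
      rw [Function.update_of_ne (by rintro rfl; omega)]
    · intro K h1 h2
      rw [sum_spareArea_update _ _ _ h1 h2]
      simp only [spareArea, hc, Option.isSome_some, if_true, Option.isSome_none,
        Bool.false_eq_true, if_false]
      ring

/-! ### Packing items into boxes -/

/-- The space occupied by the item `q.2` placed at `q.1 = (bin, translation vector)`. -/
def occ (q : (ℕ × ℝ × ℝ) × LShape) : Set (ℕ × ℝ × ℝ) :=
  {p | p.1 = q.1.1 ∧ p.2 ∈ interior (planeTranslate q.1.2 q.2.toSet)}

/-- The larger of the areas of the two arms, a lower bound for the area of the L-shape. -/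
noncomputable def weight (L : LShape) : ℝ := max (L.ly * L.wx) (L.lx * L.wy)

/-- The potential of the active box of class `c`, if there is one: its area minus eight times
the item weight that its offset `u.2` certifies. It is at most `0` once the offset exceeds half
the side in some direction. -/
noncomputable def curPot (c : ℕ × ℕ) : Option ((ℕ × ℝ × ℝ) × ℝ × ℝ) → ℝ
  | none => 0
  | some u => boxArea c - 2 * max (u.2.1 * side c.2) (u.2.2 * side c.1)

/-- The invariant of the algorithm after the placements `P`. Bins `0, …, n - 1` are open, `sp`
gives the spare boxes and `cu` the active boxes: `cu c = some (r, s)` says that the active box of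
class `c` is at `r` and that its part beyond the offset `s` is still available. The field `bound`
is the area accounting, with sums over any sufficiently large finite set of classes. -/
structure PackInv (P : List ((ℕ × ℝ × ℝ) × LShape)) (n : ℕ)
    (sp : ℕ × ℕ → Option (ℕ × ℝ × ℝ)) (cu : ℕ × ℕ → Option ((ℕ × ℝ × ℝ) × ℝ × ℝ))
    (K₀ : ℕ) : Prop where
  alloc : AllocInv n sp
  cunit : ∀ c u, cu c = some u → u.1.1 < n ∧ InUnit c u.1 ∧ 0 ≤ u.2.1 ∧ 0 ≤ u.2.2
  cfree : ∀ c u, cu c = some u → Disjoint (slot c u.1 u.2) (freeSpace n sp)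
  cdisj : ∀ c d u v, c ≠ d → cu c = some u → cu d = some v →
    Disjoint (slot c u.1 u.2) (slot d v.1 v.2)
  inside : ∀ q ∈ P, planeTranslate q.1.2 q.2.toSet ⊆ unitBin
  bins : ∀ q ∈ P, q.1.1 < max n 1
  ofree : ∀ q ∈ P, Disjoint (occ q) (freeSpace n sp)
  ocur : ∀ q ∈ P, ∀ c u, cu c = some u → Disjoint (occ q) (slot c u.1 u.2)
  pair : P.Pairwise fun a b => Disjoint (occ a) (occ b)
  bound : ∀ K, K₀ ≤ K → (n : ℝ) ≤ ∑ c ∈ classes K, spareArea sp c +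
    ∑ c ∈ classes K, curPot c (cu c) + 8 * (P.map fun q => weight q.2).sum

lemma sum_curPot_update (cu : ℕ × ℕ → Option ((ℕ × ℝ × ℝ) × ℝ × ℝ)) (c : ℕ × ℕ)
    (o : Option ((ℕ × ℝ × ℝ) × ℝ × ℝ)) {K : ℕ} (h₁ : c.1 < K) (h₂ : c.2 < K) :
    ∑ d ∈ classes K, curPot d (Function.update cu c o d) =
      curPot c o - curPot c (cu c) + ∑ d ∈ classes K, curPot d (cu d) := by
  have hc : c ∈ classes K := by simp [classes, h₁, h₂]
  rw [← Finset.add_sum_erase _ _ hc, ← Finset.add_sum_erase _ (fun d => curPot d (cu d)) hc]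
  have : ∑ d ∈ (classes K).erase c, curPot d (Function.update cu c o d) =
      ∑ d ∈ (classes K).erase c, curPot d (cu d) := by
    refine Finset.sum_congr rfl fun d hd => ?_
    rw [Function.update_of_ne (Finset.ne_of_mem_erase hd)]
  rw [this]
  simp only [Function.update_self]
  ring

/-- Before an item of class `c` arrives one may assume that the active box of class `c` exists
and its offset is at most half the side in both directions: otherwise the box is replaced by a
new one, which does not hurt the accounting since the old potential is at most `0`. -/
lemma exists_usable {P : List ((ℕ × ℝ × ℝ) × LShape)} {n : ℕ}
    {sp : ℕ × ℕ → Option (ℕ × ℝ × ℝ)} {cu : ℕ × ℕ → Option ((ℕ × ℝ × ℝ) × ℝ × ℝ)} {K₀ : ℕ}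
    (h : PackInv P n sp cu K₀) (c : ℕ × ℕ) :
    ∃ n' sp' cu' K₁ u, PackInv P n' sp' cu' K₁ ∧ cu' c = some u ∧ u.2.1 ≤ side c.1 / 2 ∧
      u.2.2 ≤ side c.2 / 2 := by
  by_cases hu : ∃ u, cu c = some u ∧ u.2.1 ≤ side c.1 / 2 ∧ u.2.2 ≤ side c.2 / 2
  · obtain ⟨u, h1, h2, h3⟩ := hu
    exact ⟨n, sp, cu, K₀, u, h, h1, h2, h3⟩
  have hpot : curPot c (cu c) ≤ 0 := by
    rcases hc : cu c with _ | u
    · exact le_rfl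
    · have h1 := side_pos c.1
      have h2 := side_pos c.2
      simp only [curPot, boxArea]
      by_cases hx : u.2.1 ≤ side c.1 / 2
      · have hy : side c.2 / 2 < u.2.2 := by
          by_contra hy
          exact hu ⟨u, hc, hx, not_lt.1 hy⟩
        have := le_max_right (u.2.1 * side c.2) (u.2.2 * side c.1)
        nlinarith
      · have := le_max_left (u.2.1 * side c.2) (u.2.2 * side c.1)
        nlinarith
  obtain ⟨r, n', sp', hI', hru, hrn, hn, hrf, hff, hrd, -, hK⟩ := exists_alloc c n sp h.alloc
  refine ⟨n', sp', Function.update cu c (some (r, (0, 0))), max K₀ (max (c.1 + 1) (c.2 + 1)),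
    (r, (0, 0)), ?_, by simp, (half_pos (side_pos _)).le,
    (half_pos (side_pos _)).le⟩
  refine ⟨hI', ?_, ?_, ?_, h.inside, ?_, ?_, ?_, h.pair, ?_⟩
  · intro d u hd
    by_cases hdc : d = c
    · subst hdc
      simp only [Function.update_self, Option.some.injEq] at hd
      subst hd
      exact ⟨hrn, hru, le_rfl, le_rfl⟩
    · rw [Function.update_of_ne hdc] at hd
      exact ⟨(h.cunit d u hd).1.trans_le hn, (h.cunit d u hd).2⟩
  · intro d u hd
    by_cases hdc : d = c
    · subst hdc
      simp only [Function.update_self, Option.some.injEq] at hd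
      subst hd
      exact hrd
    · rw [Function.update_of_ne hdc] at hd
      exact (h.cfree d u hd).mono_right hff
  · intro d e u v hde hd he
    by_cases hdc : d = c
    · subst hdc
      rw [Function.update_of_ne hde.symm] at he
      simp only [Function.update_self, Option.some.injEq] at hd
      subst hd
      exact ((h.cfree e v he).mono_right hrf).symm
    · rw [Function.update_of_ne hdc] at hd
      by_cases hec : e = c
      · subst hec
        simp only [Function.update_self, Option.some.injEq] at he
        subst he
        exact (h.cfree d u hd).mono_right hrf
      · rw [Function.update_of_ne hec] at he
        exact h.cdisj d e u v hde hd he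
  · exact fun q hq => (h.bins q hq).trans_le (max_le_max hn le_rfl)
  · exact fun q hq => (h.ofree q hq).mono_right hff
  · intro q hq d u hd
    by_cases hdc : d = c
    · subst hdc
      simp only [Function.update_self, Option.some.injEq] at hd
      subst hd
      exact (h.ofree q hq).mono_right hrf
    · rw [Function.update_of_ne hdc] at hd
      exact h.ocur q hq d u hd
  · intro K hKK
    simp only [max_le_iff] at hKK
    have h1 := h.bound K hKK.1
    have h2 := hK K (by omega) (by omega)
    rw [sum_curPot_update _ _ _ (by omega) (by omega)]
    have h3 : curPot c (some (r, (0, 0))) = boxArea c := by simp [curPot]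
    rw [h3]
    linarith

lemma mem_translate {L : LShape} {v p : ℝ × ℝ} (hp : p ∈ planeTranslate v L.toSet) :
    v.1 ≤ p.1 ∧ v.2 ≤ p.2 ∧
      ((p.1 ≤ v.1 + L.lx ∧ p.2 ≤ v.2 + L.wy) ∨ (p.1 ≤ v.1 + L.wx ∧ p.2 ≤ v.2 + L.ly)) := by
  obtain ⟨q, hq, rfl⟩ := hp
  simp only [LShape.toSet, Set.mem_union, Set.mem_Icc, Prod.le_def] at hq
  simp only [Prod.fst_add, Prod.snd_add]
  rcases hq with ⟨⟨h1, h2⟩, h3, h4⟩ | ⟨⟨h1, h2⟩, h3, h4⟩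
  · refine ⟨by linarith, by linarith, Or.inl ⟨by linarith, by linarith⟩⟩
  · refine ⟨by linarith, by linarith, Or.inr ⟨by linarith, by linarith⟩⟩

lemma translate_subset {L : LShape} (hL : L.IsValid) (v : ℝ × ℝ) :
    planeTranslate v L.toSet ⊆ Set.Icc v.1 (v.1 + L.lx) ×ˢ Set.Icc v.2 (v.2 + L.ly) := by
  intro p hp
  obtain ⟨h1, h2, h3⟩ := mem_translate hp
  obtain ⟨-, g2, -, -, g5, -⟩ := hL
  simp only [Set.mem_prod, Set.mem_Icc]
  rcases h3 with ⟨h3, h4⟩ | ⟨h3, h4⟩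
  · refine ⟨⟨by linarith, by linarith⟩, by linarith, by linarith⟩
  · refine ⟨⟨by linarith, by linarith⟩, by linarith, by linarith⟩

lemma interior_translate_subset {L : LShape} (hL : L.IsValid) (v : ℝ × ℝ) :
    interior (planeTranslate v L.toSet) ⊆
      Set.Ioo v.1 (v.1 + L.lx) ×ˢ Set.Ioo v.2 (v.2 + L.ly) := by
  have := interior_mono (translate_subset hL v)
  rwa [interior_prod_eq, interior_Icc, interior_Icc] at this

/-- There is a class `i` with `2⁻ⁱ / 4 < t ≤ 2⁻ⁱ / 2`. -/
lemma exists_class {t : ℝ} (h0 : 0 < t) (h1 : t ≤ 1 / 2) :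
    ∃ i, t ≤ side i / 2 ∧ side i ≤ 4 * t := by
  obtain ⟨i, h2, h3⟩ := exists_nat_pow_near_of_lt_one (x := 2 * t) (y := 1 / 2) (by linarith)
    (by linarith) (by norm_num) (by norm_num)
  refine ⟨i, ?_, ?_⟩
  · unfold side; linarith
  · rw [pow_succ] at h2; unfold side; linarith

/-- The placements `P` admit auxiliary data satisfying the invariant. -/
def Good (P : List ((ℕ × ℝ × ℝ) × LShape)) : Prop := ∃ n sp cu K₀, PackInv P n sp cu K₀

lemma good_nil : Good [] := by
  refine ⟨0, fun _ => none, fun _ => none, 0, ⟨by simp, by simp⟩, by simp, by simp, by simp,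
    by simp, by simp, by simp, by simp, by simp, ?_⟩
  intro K _
  simp [spareArea, curPot]

/-- The online step: one more small L-shape can be placed. An item of class `c` goes to the
offset of the active box of class `c`, and the offset then moves by the widths of the item. An
item with an arm of length `0` has no interior and goes to bin `0`. -/
lemma exists_extend {P : List ((ℕ × ℝ × ℝ) × LShape)} (hP : Good P) {L : LShape}
    (hL : L.IsValid) (hx : L.lx ≤ 1 / 2) (hy : L.ly ≤ 1 / 2) : ∃ p, Good (P ++ [(p, L)]) := by
  obtain ⟨n, sp, cu, K₀, h⟩ := hP
  have hL' := hL
  obtain ⟨g1, g2, g3, g4, g5, g6⟩ := hL'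
  by_cases hdeg : L.lx = 0 ∨ L.ly = 0
  · refine ⟨(0, 0, 0), n, sp, cu, K₀, ?_⟩
    have hocc : occ ((0, 0, 0), L) = ∅ := by
      rw [Set.eq_empty_iff_forall_notMem]
      rintro p ⟨-, hp⟩
      have := interior_translate_subset hL _ hp
      simp only [Set.mem_prod, Set.mem_Ioo] at this
      obtain ⟨⟨h1, h2⟩, h3, h4⟩ := this
      rcases hdeg with h0 | h0 <;> linarith
    refine ⟨h.alloc, h.cunit, h.cfree, h.cdisj, ?_, ?_, ?_, ?_, ?_, ?_⟩
    · intro q hq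
      rcases List.mem_append.1 hq with hq | hq
      · exact h.inside q hq
      · obtain rfl := List.mem_singleton.1 hq
        refine (translate_subset hL _).trans ?_
        rintro ⟨x, y⟩ ⟨⟨h1, h2⟩, h3, h4⟩
        simp only [unitBin, Set.mem_Icc, Prod.mk_le_mk] at *
        refine ⟨⟨?_, ?_⟩, ?_, ?_⟩ <;> linarith
    · intro q hq
      rcases List.mem_append.1 hq with hq | hq
      · exact h.bins q hq
      · obtain rfl := List.mem_singleton.1 hq
        simp
    · intro q hq
      rcases List.mem_append.1 hq with hq | hq
      · exact h.ofree q hq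
      · obtain rfl := List.mem_singleton.1 hq
        simp [hocc]
    · intro q hq
      rcases List.mem_append.1 hq with hq | hq
      · exact h.ocur q hq
      · obtain rfl := List.mem_singleton.1 hq
        simp [hocc]
    · rw [List.pairwise_append]
      refine ⟨h.pair, by simp, ?_⟩
      intro a _ b hb
      obtain rfl := List.mem_singleton.1 hb
      simp [hocc]
    · intro K hK
      have hw : 0 ≤ weight L :=
        (mul_nonneg (by linarith) g1).trans (le_max_left (L.ly * L.wx) (L.lx * L.wy))
      have := h.bound K hK
      simp only [List.map_append, List.sum_append, List.map_cons, List.map_nil, List.sum_cons,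
        List.sum_nil]
      linarith
  rw [not_or] at hdeg
  have hlx : 0 < L.lx := lt_of_le_of_ne (by linarith) (Ne.symm hdeg.1)
  have hly : 0 < L.ly := lt_of_le_of_ne (by linarith) (Ne.symm hdeg.2)
  obtain ⟨i, hi1, hi2⟩ := exists_class hlx hx
  obtain ⟨j, hj1, hj2⟩ := exists_class hly hy
  obtain ⟨n, sp, cu, K₀, ⟨⟨b, x, y⟩, s, t⟩, h, huc, hs, ht⟩ := exists_usable h (i, j)
  obtain ⟨hbn, ⟨hx0, hx1, hy0, hy1⟩, hs0, ht0⟩ := h.cunit _ _ huc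
  simp only at hbn hx0 hx1 hy0 hy1 hs0 ht0 hs ht
  -- The item lies in the available part of the active box, and avoids what is left of it.
  have hocc : occ ((b, x + s, y + t), L) ⊆ slot (i, j) (b, x, y) (s, t) := by
    rintro ⟨b', x', y'⟩ ⟨h1, h2⟩
    obtain ⟨⟨h3, h4⟩, h5, h6⟩ := interior_translate_subset hL _ h2
    simp only [slot, Set.mem_ofPred_eq] at *
    refine ⟨h1, ?_, ?_, ?_, ?_⟩ <;> linarith
  have hsub : slot (i, j) (b, x, y) (s + L.wx, t + L.wy) ⊆ slot (i, j) (b, x, y) (s, t) := by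
    rintro ⟨b', x', y'⟩ ⟨h1, h2, h3, h4, h5⟩
    simp only [slot, Set.mem_ofPred_eq] at *
    refine ⟨h1, ?_, ?_, ?_, ?_⟩ <;> linarith
  have hnew : Disjoint (occ ((b, x + s, y + t), L))
      (slot (i, j) (b, x, y) (s + L.wx, t + L.wy)) := by
    rw [Set.disjoint_left]
    rintro ⟨b', x', y'⟩ ⟨h1, h2⟩ ⟨h1, h3, h4, h5, h6⟩
    obtain ⟨-, -, h7⟩ := mem_translate (interior_subset h2)
    simp only at *
    rcases h7 with h7 | h7 <;> linarith
  refine ⟨(b, x + s, y + t), n, sp,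
    Function.update cu (i, j) (some ((b, x, y), (s + L.wx, t + L.wy))),
    max K₀ (max (i + 1) (j + 1)), ?_⟩
  refine ⟨h.alloc, ?_, ?_, ?_, ?_, ?_, ?_, ?_, ?_, ?_⟩
  · intro d u hd
    by_cases hdc : d = (i, j)
    · subst hdc
      simp only [Function.update_self, Option.some.injEq] at hd
      subst hd
      exact ⟨hbn, ⟨hx0, hx1, hy0, hy1⟩, add_nonneg hs0 g1, add_nonneg ht0 g4⟩
    · rw [Function.update_of_ne hdc] at hd
      exact h.cunit d u hd
  · intro d u hd
    by_cases hdc : d = (i, j)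
    · subst hdc
      simp only [Function.update_self, Option.some.injEq] at hd
      subst hd
      exact (h.cfree _ _ huc).mono_left hsub
    · rw [Function.update_of_ne hdc] at hd
      exact h.cfree d u hd
  · intro d e u v hde hd he
    by_cases hdc : d = (i, j)
    · subst hdc
      rw [Function.update_of_ne hde.symm] at he
      simp only [Function.update_self, Option.some.injEq] at hd
      subst hd
      exact (h.cdisj _ _ _ _ hde huc he).mono_left hsub
    · rw [Function.update_of_ne hdc] at hd
      by_cases hec : e = (i, j)
      · subst hec
        simp only [Function.update_self, Option.some.injEq] at he
        subst he
        exact (h.cdisj _ _ _ _ hde hd huc).mono_right hsub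
      · rw [Function.update_of_ne hec] at he
        exact h.cdisj d e u v hde hd he
  · intro q hq
    rcases List.mem_append.1 hq with hq | hq
    · exact h.inside q hq
    · obtain rfl := List.mem_singleton.1 hq
      refine (translate_subset hL _).trans ?_
      rintro ⟨x', y'⟩ ⟨⟨h1, h2⟩, h3, h4⟩
      simp only [unitBin, Set.mem_Icc, Prod.mk_le_mk] at *
      refine ⟨⟨?_, ?_⟩, ?_, ?_⟩ <;> linarith
  · intro q hq
    rcases List.mem_append.1 hq with hq | hq
    · exact h.bins q hq
    · obtain rfl := List.mem_singleton.1 hq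
      exact lt_max_of_lt_left hbn
  · intro q hq
    rcases List.mem_append.1 hq with hq | hq
    · exact h.ofree q hq
    · obtain rfl := List.mem_singleton.1 hq
      exact (h.cfree _ _ huc).mono_left hocc
  · intro q hq d u hd
    rcases List.mem_append.1 hq with hq | hq
    · by_cases hdc : d = (i, j)
      · subst hdc
        simp only [Function.update_self, Option.some.injEq] at hd
        subst hd
        exact (h.ocur q hq _ _ huc).mono_right hsub
      · rw [Function.update_of_ne hdc] at hd
        exact h.ocur q hq d u hd
    · obtain rfl := List.mem_singleton.1 hq
      by_cases hdc : d = (i, j)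
      · subst hdc
        simp only [Function.update_self, Option.some.injEq] at hd
        subst hd
        exact hnew
      · rw [Function.update_of_ne hdc] at hd
        exact (h.cdisj _ _ _ _ (Ne.symm hdc) huc hd).mono_left hocc
  · rw [List.pairwise_append]
    refine ⟨h.pair, by simp, ?_⟩
    intro a ha q hq
    obtain rfl := List.mem_singleton.1 hq
    exact (h.ocur a ha _ _ huc).mono_right hocc
  · intro K hK
    simp only [max_le_iff] at hK
    have := h.bound K hK.1
    rw [sum_curPot_update _ _ _ (by simp only; omega) (by simp only; omega), huc]
    simp only [List.map_append, List.sum_append, List.map_cons, List.map_nil, List.sum_cons,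
      List.sum_nil]
    rw [curPot, curPot]
    -- The arms are longer than a quarter of the sides, so the potential drops by at most
    -- eight times the weight.
    have hmax : max ((s + L.wx) * side j) ((t + L.wy) * side i) ≤
        max (s * side j) (t * side i) + 4 * weight L := by
      have h1 := le_max_left (s * side j) (t * side i)
      have h2 := le_max_right (s * side j) (t * side i)
      have h3 : L.ly * L.wx ≤ weight L := le_max_left _ _
      have h4 : L.lx * L.wy ≤ weight L := le_max_right _ _
      have h5 := mul_le_mul_of_nonneg_left hj2 g1
      have h6 := mul_le_mul_of_nonneg_left hi2 g4
      refine max_le ?_ ?_ <;> nlinarith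
    linarith

/-! ### The offline lower bound -/

/-- The open rectangle inside either arm lies in the interior of the L-shape. -/
lemma weight_le_volume {L : LShape} (hL : L.IsValid) (v : ℝ × ℝ) :
    ENNReal.ofReal (weight L) ≤ MeasureTheory.volume (interior (planeTranslate v L.toSet)) := by
  have key : ∀ a b : ℝ, Set.Icc ((0, 0) : ℝ × ℝ) (a, b) ⊆ L.toSet → 0 ≤ a →
      ENNReal.ofReal (a * b) ≤ MeasureTheory.volume (interior (planeTranslate v L.toSet)) := by
    intro a b hab h0
    have hsub : Set.Ioo v.1 (v.1 + a) ×ˢ Set.Ioo v.2 (v.2 + b) ⊆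
        interior (planeTranslate v L.toSet) := by
      refine interior_maximal ?_ (isOpen_Ioo.prod isOpen_Ioo)
      rintro ⟨x, y⟩ ⟨⟨h1, h2⟩, h3, h4⟩
      simp only at h1 h2 h3 h4
      refine ⟨(x - v.1, y - v.2), hab ?_, by ext <;> simp⟩
      simp only [Set.mem_Icc, Prod.mk_le_mk]
      refine ⟨⟨?_, ?_⟩, ?_, ?_⟩ <;> linarith
    refine le_trans ?_ (MeasureTheory.measure_mono hsub)
    rw [MeasureTheory.Measure.volume_eq_prod, MeasureTheory.Measure.prod_prod, Real.volume_Ioo,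
      Real.volume_Ioo, add_sub_cancel_left, add_sub_cancel_left]
    rw [ENNReal.ofReal_mul h0]
  obtain ⟨g1, g2, -⟩ := hL
  rcases max_choice (L.ly * L.wx) (L.lx * L.wy) with h | h <;> rw [weight, h]
  · rw [mul_comm]
    exact key _ _ Set.subset_union_right g1
  · exact key _ _ Set.subset_union_left (g1.trans g2)

/-- Area bound: if the items fit into `m` bins, their total weight is at most `m`. -/
lemma weight_le_of_offPacks {l : List LShape} {m : ℕ} (hv : ∀ L ∈ l, L.IsValid)
    (h : OffPacks l m) : (l.map weight).sum ≤ m := by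
  obtain ⟨bin, v, hb, hin, hd⟩ := h
  have hw : ∀ i : Fin l.length, 0 ≤ weight (l.get i) := fun i => by
    obtain ⟨h1, h2, -, h4, h5, -⟩ := hv _ (l.get_mem i)
    exact (mul_nonneg (h4.trans h5) h1).trans (le_max_left _ _)
  have hsum : (l.map weight).sum = ∑ i : Fin l.length, weight (l.get i) := by
    simp [← Fin.sum_univ_fun_getElem]
  have hunit : MeasureTheory.volume unitBin = 1 := by
    rw [unitBin, ← Set.Icc_prod_Icc, MeasureTheory.Measure.volume_eq_prod,
      MeasureTheory.Measure.prod_prod, Real.volume_Icc]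
    simp
  have hE : ENNReal.ofReal (l.map weight).sum ≤ ENNReal.ofReal m := by
    rw [hsum, ENNReal.ofReal_sum_of_nonneg fun i _ => hw i]
    calc ∑ i, ENNReal.ofReal (weight (l.get i))
        ≤ ∑ i, MeasureTheory.volume (interior (planeTranslate (v i) (l.get i).toSet)) :=
          Finset.sum_le_sum fun i _ => weight_le_volume (hv _ (l.get_mem i)) _
      _ = ∑ b ∈ Finset.range m, ∑ i with bin i = b,
            MeasureTheory.volume (interior (planeTranslate (v i) (l.get i).toSet)) :=
          (Finset.sum_fiberwise_of_maps_to (fun i _ => Finset.mem_range.2 (hb i)) _).symm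
      _ ≤ ∑ b ∈ Finset.range m, 1 := by
          refine Finset.sum_le_sum fun b _ => ?_
          rw [← MeasureTheory.measure_biUnion_finset _ fun i _ => isOpen_interior.measurableSet]
          · rw [← hunit]
            exact MeasureTheory.measure_mono
              (Set.iUnion₂_subset fun i _ => interior_subset.trans (hin i))
          · intro i hi j hj hij
            simp only [Finset.coe_filter, Finset.mem_univ, true_and, Set.mem_ofPred_eq] at hi hj
            exact hd i j hij (hi.trans hj.symm)
      _ = ENNReal.ofReal m := by simp
  exact (ENNReal.ofReal_le_ofReal_iff (Nat.cast_nonneg m)).1 hE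

lemma offPacks_OPT {l : List LShape} (hv : ∀ L ∈ l, L.IsValid) : OffPacks l (OPT l) := by
  refine Nat.sInf_mem (s := {m | OffPacks l m}) ⟨l.length, fun i => i, fun _ => (0, 0),
    fun i => i.2, fun i => ?_, fun i j hij h => absurd (Fin.ext h) hij⟩
  have hL := hv _ (l.get_mem i)
  refine (translate_subset hL _).trans ?_
  obtain ⟨-, -, g3, -, -, g6⟩ := hL
  rintro ⟨x, y⟩ ⟨⟨h1, h2⟩, h3, h4⟩
  simp only [unitBin, Set.mem_Icc, Prod.mk_le_mk] at *
  refine ⟨⟨?_, ?_⟩, ?_, ?_⟩ <;> linarith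

/-! ### The online algorithm -/

open Classical in
/-- A placement of `L` that keeps the invariant, if there is one. -/
noncomputable def nextPlace (P : List ((ℕ × ℝ × ℝ) × LShape)) (L : LShape) : ℕ × ℝ × ℝ :=
  if h : ∃ p, Good (P ++ [(p, L)]) then h.choose else (0, 0, 0)

/-- All placements made on the input `l`. -/
noncomputable def run (l : List LShape) : List ((ℕ × ℝ × ℝ) × LShape) :=
  l.foldl (fun P L => P ++ [(nextPlace P L, L)]) []

/-- The algorithm: the last placement made on the input `l`. -/
noncomputable def alg (l : List LShape) : ℕ × ℝ × ℝ :=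
  ((run l).getLast?.map Prod.fst).getD (0, 0, 0)

lemma run_concat (l : List LShape) (L : LShape) :
    run (l ++ [L]) = run l ++ [(nextPlace (run l) L, L)] := by
  simp [run, List.foldl_append]

lemma run_map_snd (l : List LShape) : (run l).map Prod.snd = l := by
  induction l using List.reverseRecOn with
  | nil => rfl
  | append_singleton l L ih => rw [run_concat]; simp [ih]

lemma run_length (l : List LShape) : (run l).length = l.length := by
  rw [← List.length_map (f := Prod.snd), run_map_snd]

lemma run_getElem? (l : List LShape) (i : ℕ) (hi : i < l.length) :
    (run l)[i]? = some (alg (l.take (i + 1)), l[i]) := by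
  induction l using List.reverseRecOn with
  | nil => simp at hi
  | append_singleton l L ih =>
    rw [run_concat]
    by_cases h : i < l.length
    · rw [List.getElem?_append_left (by rwa [run_length]), ih h, List.take_append_of_le_length h,
        List.getElem_append_left h]
    · have : i = l.length := by simp at hi; omega
      subst this
      rw [List.getElem?_append_right (by rw [run_length])]
      rw [List.take_of_length_le (by simp)]
      simp [run_length, alg, run_concat]

lemma good_run (l : List LShape) (hl : ∀ L ∈ l, L.IsValid ∧ L.lx ≤ 1 / 2 ∧ L.ly ≤ 1 / 2) :
    Good (run l) := by
  induction l using List.reverseRecOn with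
  | nil => exact good_nil
  | append_singleton l L ih =>
    have h := ih fun M hM => hl M (by simp [hM])
    obtain ⟨h1, h2, h3⟩ := hl L (by simp)
    have hex := exists_extend h h1 h2 h3
    rw [run_concat, nextPlace, dif_pos hex]
    exact hex.choose_spec

/-- there is a deterministic online bin-packing algorithm that, on every input
sequence of small L-shapes (`ℓx ≤ 1/2` and `ℓy ≤ 1/2`), produces a valid packing using at
most `8·OPT + 7` bins. -/
theorem stmt7 :
    ∃ A : List LShape → ℕ × ℝ × ℝ,
      ∀ l : List LShape,
        (∀ L ∈ l, L.IsValid ∧ L.lx ≤ 1 / 2 ∧ L.ly ≤ 1 / 2) →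
        OnlinePacks A l ∧ binsUsed A l ≤ 8 * OPT l + 7 := by
  refine ⟨alg, fun l hl => ?_⟩
  have hv : ∀ L ∈ l, L.IsValid := fun L hL => (hl L hL).1
  obtain ⟨n, sp, cu, K₀, h⟩ := good_run l hl
  have hlen := run_length l
  have hget : ∀ i : Fin l.length,
      (run l)[i.1]'(hlen.symm ▸ i.2) = (placeOf alg l i, l.get i) := fun i =>
    (List.getElem?_eq_some_iff.1 (run_getElem? l i.1 i.2)).2
  have hmem : ∀ i : Fin l.length, (placeOf alg l i, l.get i) ∈ run l := fun i => by
    rw [← hget i]; exact List.getElem_mem _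
  have hocc : ∀ i j : Fin l.length, i < j →
      Disjoint (occ (placeOf alg l i, l.get i)) (occ (placeOf alg l j, l.get j)) := by
    intro i j hij
    have := List.pairwise_iff_getElem.1 h.pair i.1 j.1 (hlen.symm ▸ i.2) (hlen.symm ▸ j.2) hij
    rwa [hget, hget] at this
  refine ⟨⟨fun i => h.inside _ (hmem i), fun i j hij hbin => ?_⟩, ?_⟩
  · have hd : Disjoint (occ (placeOf alg l i, l.get i)) (occ (placeOf alg l j, l.get j)) := by
      rcases lt_or_gt_of_ne hij with h' | h'
      · exact hocc i j h'
      · exact (hocc j i h').symm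
    rw [Set.disjoint_left] at hd ⊢
    intro p hp hq
    exact hd (a := ((placeOf alg l i).1, p)) ⟨rfl, hp⟩ ⟨hbin, hq⟩
  · have hcard : binsUsed alg l ≤ max n 1 := by
      rw [← Finset.card_range (max n 1)]
      refine Finset.card_le_card fun b hb => ?_
      obtain ⟨i, -, rfl⟩ := Finset.mem_image.1 hb
      exact Finset.mem_range.2 (h.bins _ (hmem i))
    have hweight : ((run l).map fun q => weight q.2).sum ≤ OPT l := by
      have : ((run l).map fun q => weight q.2) = l.map weight := by
        conv_rhs => rw [← run_map_snd l]
        rw [List.map_map]; rfl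
      rw [this]
      exact weight_le_of_offPacks hv (offPacks_OPT hv)
    have hsp : ∑ c ∈ classes K₀, spareArea sp c ≤ ∑ c ∈ classes K₀, boxArea c := by
      refine Finset.sum_le_sum fun c _ => ?_
      unfold spareArea
      split_ifs
      · exact le_rfl
      · exact (boxArea_pos c).le
    have hcu : ∑ c ∈ classes K₀, curPot c (cu c) ≤ ∑ c ∈ classes K₀, boxArea c := by
      refine Finset.sum_le_sum fun c _ => ?_
      rcases hc : cu c with _ | u
      · exact (boxArea_pos c).le
      · have h1 := mul_nonneg (h.cunit c u hc).2.2.1 (side_pos c.2).le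
        have h2 := h1.trans (le_max_left _ (u.2.2 * side c.1))
        rw [curPot]
        linarith
    have hb := h.bound K₀ le_rfl
    have h4 := sum_boxArea_lt K₀
    -- The two sums are less than `4` each, so `n < 8 * OPT l + 8`.
    have hn : (n : ℝ) < ((8 * OPT l + 8 : ℕ) : ℝ) := by push_cast; linarith
    have hn' : n < 8 * OPT l + 8 := by exact_mod_cast hn
    omega
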